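/- arXiv:1807.08672 — 2 statements merged into one kernel-verified Lean document; each statement's English description precedes it below -/
import Mathlib

section
/- Let g(w) = (w f_z(w))′ = f_z(w) + w f_z′(w). For every z > 2, every i ∈ {1, …, n} and every real u ≤ 1, E[g(W̄⁽ⁱ⁾ + u)] ≤ (25.8 + 20 e^{e² − 2}/√(2π)) · e^{−z/2}. -/
open MeasureTheory ProbabilityTheory Real

/-- The standard normal cumulative distribution function. -/
noncomputable def Phi (z : ℝ) : ℝ :=
  (Real.sqrt (2 * Real.pi))⁻¹ * ∫ u in Set.Iic z, Real.exp (-u ^ 2 / 2)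

/-- The bounded solution `f_z` of the Stein equation
`f'(w) - w f(w) = 1{w ≤ z} - Φ(z)`. -/
noncomputable def fz (z w : ℝ) : ℝ :=
  if w ≤ z then Real.sqrt (2 * Real.pi) * Real.exp (w ^ 2 / 2) * Phi w * (1 - Phi z)
  else Real.sqrt (2 * Real.pi) * Real.exp (w ^ 2 / 2) * Phi z * (1 - Phi w)

/-- The derivative `f_z'`, expressed via the Stein equation. -/
noncomputable def fz' (z w : ℝ) : ℝ :=
  w * fz z w + (if w ≤ z then 1 else 0) - Phi z

/-- The truncation `x̄ᵢ = ξᵢ 1{ξᵢ ≤ 1}`. -/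
noncomputable def xbar {Ω : Type*} {n : ℕ} (ξ : Fin n → Ω → ℝ) (i : Fin n) (ω : Ω) : ℝ :=
  if ξ i ω ≤ 1 then ξ i ω else 0

/-- `W̄ = ∑ᵢ x̄ᵢ`. -/
noncomputable def Wbar {Ω : Type*} {n : ℕ} (ξ : Fin n → Ω → ℝ) (ω : Ω) : ℝ :=
  ∑ i, xbar ξ i ω

/-- `W̄⁽ⁱ⁾ = W̄ - x̄ᵢ`. -/
noncomputable def Wbari {Ω : Type*} {n : ℕ} (ξ : Fin n → Ω → ℝ) (i : Fin n) (ω : Ω) : ℝ :=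
  Wbar ξ ω - xbar ξ i ω

/-- `K̄ᵢ(t) = E[x̄ᵢ (1{0 ≤ t ≤ x̄ᵢ} - 1{x̄ᵢ ≤ t < 0})]`. -/
noncomputable def Kbar {Ω : Type*} [MeasureSpace Ω] {n : ℕ} (ξ : Fin n → Ω → ℝ)
    (i : Fin n) (t : ℝ) : ℝ :=
  ∫ ω, xbar ξ i ω * ((if 0 ≤ t ∧ t ≤ xbar ξ i ω then (1 : ℝ) else 0)
    - (if xbar ξ i ω ≤ t ∧ t < 0 then (1 : ℝ) else 0))

/-- `β₂ = ∑ᵢ E[ξᵢ² 1{|ξᵢ| > 1}]`. -/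
noncomputable def beta2 {Ω : Type*} [MeasureSpace Ω] {n : ℕ} (ξ : Fin n → Ω → ℝ) : ℝ :=
  ∑ i, ∫ ω, (if 1 < |ξ i ω| then (ξ i ω) ^ 2 else 0)

/-- `β₃ = ∑ᵢ E[|ξᵢ|³ 1{|ξᵢ| ≤ 1}]`. -/
noncomputable def beta3 {Ω : Type*} [MeasureSpace Ω] {n : ℕ} (ξ : Fin n → Ω → ℝ) : ℝ :=
  ∑ i, ∫ ω, (if |ξ i ω| ≤ 1 then |ξ i ω| ^ 3 else 0)

lemma gauss_int : Integrable (fun u : ℝ => Real.exp (-u ^ 2 / 2)) := by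
  have := integrable_exp_neg_mul_sq (b := 1/2) (by norm_num)
  refine this.congr (Filter.Eventually.of_forall fun u => ?_)
  simp only; congr 1; ring

lemma gauss_total : ∫ u : ℝ, Real.exp (-u ^ 2 / 2) = Real.sqrt (2 * Real.pi) := by
  have := integral_gaussian (1/2)
  rw [show Real.pi / (1/2) = 2 * Real.pi by ring] at this
  rw [← this]; congr 1; ext u; congr 1; ring

lemma sqrt_pos' : 0 < Real.sqrt (2 * Real.pi) := Real.sqrt_pos.2 (by positivity)

lemma one_le_sqrt_twopi : 1 ≤ Real.sqrt (2 * Real.pi) :=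
  Real.one_le_sqrt.2 (by linarith [Real.pi_gt_three])

lemma Phi_nonneg (z : ℝ) : 0 ≤ Phi z := by
  unfold Phi
  have : 0 ≤ ∫ u in Set.Iic z, Real.exp (-u ^ 2 / 2) := by positivity
  positivity

lemma sqrt_mul_Phi (z : ℝ) :
    Real.sqrt (2 * Real.pi) * Phi z = ∫ u in Set.Iic z, Real.exp (-u ^ 2 / 2) := by
  unfold Phi
  rw [mul_inv_cancel_left₀ sqrt_pos'.ne']

lemma sqrt_mul_one_sub (z : ℝ) :
    Real.sqrt (2 * Real.pi) * (1 - Phi z) = ∫ u in Set.Ioi z, Real.exp (-u ^ 2 / 2) := by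
  rw [mul_sub, sqrt_mul_Phi, mul_one, ← gauss_total]
  have := intervalIntegral.integral_Iic_add_Ioi (b := z) (f := fun u : ℝ => Real.exp (-u ^ 2 / 2))
    (μ := volume) gauss_int.integrableOn gauss_int.integrableOn
  linarith

lemma Phi_le_one (z : ℝ) : Phi z ≤ 1 := by
  have h : 0 ≤ Real.sqrt (2 * Real.pi) * (1 - Phi z) := by
    rw [sqrt_mul_one_sub]; positivity
  have := nonneg_of_mul_nonneg_right h sqrt_pos'
  linarith

lemma tail_right (w : ℝ) (hw : 0 < w) :
    Real.sqrt (2 * Real.pi) * (1 - Phi w) ≤ Real.exp (-w ^ 2 / 2) / w := by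
  rw [sqrt_mul_one_sub]
  have hi := integrableOn_exp_mul_Ioi (a := -w) (by linarith) w
  have hv := integral_exp_mul_Ioi (a := -w) (by linarith) w
  calc ∫ u in Set.Ioi w, Real.exp (-u ^ 2 / 2)
      ≤ ∫ u in Set.Ioi w, Real.exp (w ^ 2 / 2) * Real.exp (-w * u) := by
        refine setIntegral_mono gauss_int.integrableOn (hi.const_mul _) fun u => ?_
        simp only
        rw [← Real.exp_add]
        exact Real.exp_le_exp.2 (by nlinarith [sq_nonneg (u - w)])
    _ = Real.exp (-w ^ 2 / 2) / w := by
        rw [integral_const_mul, hv, neg_div_neg_eq, ← mul_div_assoc, ← Real.exp_add]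
        congr 2; ring

lemma tail_left (w : ℝ) (hw : w < 0) :
    Real.sqrt (2 * Real.pi) * Phi w ≤ Real.exp (-w ^ 2 / 2) / (-w) := by
  rw [sqrt_mul_Phi]
  have hi := integrableOn_exp_mul_Iic (a := -w) (by linarith) w
  have hv := integral_exp_mul_Iic (a := -w) (by linarith) w
  calc ∫ u in Set.Iic w, Real.exp (-u ^ 2 / 2)
      ≤ ∫ u in Set.Iic w, Real.exp (w ^ 2 / 2) * Real.exp (-w * u) := by
        refine setIntegral_mono gauss_int.integrableOn (hi.const_mul _) fun u => ?_
        simp only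
        rw [← Real.exp_add]
        exact Real.exp_le_exp.2 (by nlinarith [sq_nonneg (u - w)])
    _ = Real.exp (-w ^ 2 / 2) / (-w) := by
        rw [integral_const_mul, hv, ← mul_div_assoc, ← Real.exp_add]
        congr 2; ring

lemma exp_half_cancel (w : ℝ) : Real.exp (w ^ 2 / 2) * Real.exp (-w ^ 2 / 2) = 1 := by
  rw [← Real.exp_add, ← Real.exp_zero]; congr 1; ring

set_option maxHeartbeats 1000000 in
/-- Pointwise bound on `g`. -/
lemma g_bound (z w : ℝ) (hz : 2 < z) :
    fz z w + w * fz' z w ≤ (z + 1) * Real.exp (w - z) + Real.exp (-z) := by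
  have hS := sqrt_pos'
  have hS1 := one_le_sqrt_twopi
  have ht := tail_right z (by linarith)
  unfold fz'
  unfold fz
  have ez := Real.exp_pos (-z)
  have ewz := Real.exp_pos (w - z)
  have eW := Real.exp_pos (w ^ 2 / 2)
  have eZ := Real.exp_pos (-z ^ 2 / 2)
  have eZz : Real.exp (-z ^ 2 / 2) ≤ Real.exp (-z) := Real.exp_le_exp.2 (by nlinarith)
  have hP0 := Phi_nonneg z
  have hP1 := Phi_le_one z
  have hp0 := Phi_nonneg w
  have hp1 := Phi_le_one w
  set S := Real.sqrt (2 * Real.pi)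
  by_cases h : w ≤ z
  · simp only [h, if_true]
    set q := 1 - Phi z with hq
    have hq0 : 0 ≤ q := by linarith
    have ht' : S * q * z ≤ Real.exp (-z ^ 2 / 2) := by
      rwa [le_div_iff₀ (by linarith)] at ht
    rcases lt_or_ge w 0 with hw | hw
    · have hl := tail_left w hw
      set A := Real.exp (w ^ 2 / 2) * (S * Phi w) with hA
      have hA0 : 0 ≤ A := by positivity
      have hAw : A * (-w) ≤ 1 := by
        rw [le_div_iff₀ (by linarith)] at hl
        have := mul_le_mul_of_nonneg_left hl eW.le
        rw [exp_half_cancel] at this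
        linarith
      have hA2 : A ≤ 2 * S := by
        rcases lt_or_ge w (-1) with h1 | h1
        · nlinarith
        · have : Real.exp (w ^ 2 / 2) ≤ 2 := by
            have h2 : Real.exp (w ^ 2 / 2) ≤ Real.exp (1 / 2) := Real.exp_le_exp.2 (by nlinarith)
            have h3 : Real.exp (1 / 2) ^ 2 = Real.exp 1 := by
              rw [← Real.exp_nat_mul]; norm_num
            have := Real.exp_one_lt_d9
            nlinarith [Real.exp_pos (1 / 2)]
          have h4 : S * Phi w ≤ S := by nlinarith
          calc A ≤ 2 * (S * Phi w) := by
                rw [hA]; exact mul_le_mul_of_nonneg_right this (by positivity)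
            _ ≤ 2 * S := by linarith
      have key : S * Real.exp (w ^ 2 / 2) * Phi w * q
          + w * (w * (S * Real.exp (w ^ 2 / 2) * Phi w * q) + 1 - Phi z)
          = q * (A + w * (w * A) + w) := by rw [hA, hq]; ring
      rw [key]
      have h5 : A + w * (w * A) + w ≤ 2 * S := by nlinarith
      have h6 : q * (A + w * (w * A) + w) ≤ q * (2 * S) := mul_le_mul_of_nonneg_left h5 hq0
      have h7 : 0 ≤ S * q := by positivity
      have h8 : 0 ≤ (z + 1) * Real.exp (w - z) := by
        apply mul_nonneg <;> linarith
      nlinarith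
    · have hE : Real.exp (-z ^ 2 / 2) * Real.exp (w ^ 2 / 2) ≤ Real.exp (w - z) := by
        rw [← Real.exp_add]
        exact Real.exp_le_exp.2 (by nlinarith [mul_nonneg (sub_nonneg.2 h) (by linarith : 0 ≤ w + z - 2)])
      set B := S * q * Real.exp (w ^ 2 / 2) with hB
      have hB0 : 0 ≤ B := by positivity
      have hBz : B * z ≤ Real.exp (w - z) := by
        have := mul_le_mul_of_nonneg_right ht' eW.le
        rw [hB]; nlinarith
      have key : S * Real.exp (w ^ 2 / 2) * Phi w * q
          + w * (w * (S * Real.exp (w ^ 2 / 2) * Phi w * q) + 1 - Phi z)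
          = B * Phi w * (1 + w ^ 2) + q * w := by rw [hB, hq]; ring
      rw [key]
      have h1 : B * Phi w * (1 + w ^ 2) ≤ B * (1 + w ^ 2) := by
        apply mul_le_mul_of_nonneg_right _ (by positivity)
        nlinarith
      have h2 : B * (1 + w ^ 2) ≤ B * (z * (z + 1)) :=
        mul_le_mul_of_nonneg_left (by nlinarith) hB0
      have h3 : B * z * (z + 1) ≤ Real.exp (w - z) * (z + 1) :=
        mul_le_mul_of_nonneg_right hBz (by linarith)
      have h4 : q * w ≤ q * z := mul_le_mul_of_nonneg_left h hq0
      have h5 : q * z ≤ S * (q * z) := by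
        have : 0 ≤ q * z := mul_nonneg hq0 (by linarith)
        nlinarith
      nlinarith
  · simp only [h, if_false]
    push Not at h
    have hw : 0 < w := by linarith
    have hl := tail_right w hw
    change S * (1 - Phi w) ≤ _ at hl
    set A := Real.exp (w ^ 2 / 2) * (S * (1 - Phi w)) with hA
    have hA0 : 0 ≤ A := mul_nonneg eW.le (mul_nonneg hS.le (by linarith))
    have hAw : A * w ≤ 1 := by
      rw [le_div_iff₀ hw] at hl
      have := mul_le_mul_of_nonneg_left hl eW.le
      rw [exp_half_cancel] at this
      linarith
    have key : S * Real.exp (w ^ 2 / 2) * Phi z * (1 - Phi w)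
        + w * (w * (S * Real.exp (w ^ 2 / 2) * Phi z * (1 - Phi w)) + 0 - Phi z)
        = Phi z * (A + w * (w * A) - w) := by rw [hA]; ring
    rw [key]
    have h0 : A * 1 ≤ A * w := mul_le_mul_of_nonneg_left (by linarith) hA0
    have h01 : w * (A * w) ≤ w * 1 := mul_le_mul_of_nonneg_left hAw hw.le
    have h1 : A + w * (w * A) - w ≤ 1 := by
      rw [mul_comm w A]; linarith
    have h2 : Phi z * (A + w * (w * A) - w) ≤ Phi z * 1 := mul_le_mul_of_nonneg_left h1 hP0
    have h3 : 1 ≤ Real.exp (w - z) := Real.one_le_exp (by linarith)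
    have h4 : 1 * Real.exp (w - z) ≤ (z + 1) * Real.exp (w - z) :=
      mul_le_mul_of_nonneg_right (by linarith) ewz.le
    linarith

lemma exp_le_quad (x : ℝ) (hx : x ≤ 1) : Real.exp x ≤ 1 + x + x ^ 2 := by
  rcases lt_or_ge x (-1) with h | h
  · have : Real.exp x ≤ 1 := Real.exp_le_one_iff.2 (by linarith)
    nlinarith
  · have := Real.abs_exp_sub_one_sub_id_le (abs_le.2 ⟨h, hx⟩)
    linarith [(abs_le.1 this).2]

/-- The truncation map. -/
noncomputable def trunc1 (x : ℝ) : ℝ := if x ≤ 1 then x else 0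

lemma trunc1_meas : Measurable trunc1 :=
  Measurable.ite measurableSet_Iic measurable_id measurable_const

lemma trunc1_le_one (x : ℝ) : trunc1 x ≤ 1 := by
  unfold trunc1; split_ifs <;> linarith

lemma exp_trunc1 (x : ℝ) : Real.exp (trunc1 x) ≤ 1 + x + x ^ 2 := by
  unfold trunc1
  split_ifs with h
  · exact exp_le_quad x h
  · push Not at h
    rw [Real.exp_zero]; nlinarith

/-- Bound on E[g(Wbar^(i) + u)] where g(w) = (w f_z(w))' = f_z(w) + w f_z'(w). -/
theorem expectation_g_bound
    {Ω : Type*} [MeasureSpace Ω] [IsProbabilityMeasure (ℙ : Measure Ω)]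
    {n : ℕ} (ξ : Fin n → Ω → ℝ)
    (hmeas : ∀ i, Measurable (ξ i))
    (hindep : iIndepFun ξ ℙ)
    (hL2 : ∀ i, MemLp (ξ i) 2 ℙ)
    (hmean : ∀ i, ∫ ω, ξ i ω = 0)
    (hvar : ∑ i, ∫ ω, (ξ i ω) ^ 2 = 1)
    (z : ℝ) (hz : 2 < z) (i : Fin n) (u : ℝ) (hu : u ≤ 1) :
    (∫ ω, (fz z (Wbari ξ i ω + u) + (Wbari ξ i ω + u) * fz' z (Wbari ξ i ω + u)))
      ≤ (25.8 + 20 * Real.exp (Real.exp 1 ^ 2 - 2) / Real.sqrt (2 * Real.pi))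
          * Real.exp (-z / 2) := by
  have hxb : ∀ j, xbar ξ j = fun ω => trunc1 (ξ j ω) := fun j => rfl
  have hxm : ∀ j, Measurable (xbar ξ j) := fun j => by
    rw [hxb]; exact trunc1_meas.comp (hmeas j)
  have hxle : ∀ j ω, xbar ξ j ω ≤ 1 := fun j ω => trunc1_le_one _
  have hxind : iIndepFun (xbar ξ) ℙ := hindep.comp (fun _ => trunc1) (fun _ => trunc1_meas)
  have hW : Wbari ξ i = ∑ j ∈ Finset.univ.erase i, xbar ξ j := by
    ext ω
    simp only [Wbari, Wbar, Finset.sum_apply]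
    rw [← Finset.add_sum_erase _ _ (Finset.mem_univ i)]
    ring
  have hint : Integrable (fun ω => Real.exp (Wbari ξ i ω)) := by
    refine Integrable.of_bound (C := Real.exp ((Finset.univ.erase i).card : ℝ)) ?_ ?_
    · refine (Real.measurable_exp.comp ?_).aestronglyMeasurable
      rw [hW]
      have := Finset.measurable_sum (Finset.univ.erase i) (fun j _ => hxm j)
      convert this using 1
      ext ω
      simp
    · refine Filter.Eventually.of_forall fun ω => ?_
      rw [Real.norm_eq_abs, abs_of_pos (Real.exp_pos _)]
      apply Real.exp_le_exp.2
      rw [hW, Finset.sum_apply]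
      calc _ ≤ ∑ j ∈ Finset.univ.erase i, (1 : ℝ) := Finset.sum_le_sum fun j _ => hxle j ω
        _ = _ := by simp
  have hmgf : ∀ j, mgf (xbar ξ j) ℙ 1 ≤ Real.exp (∫ ω, (ξ j ω) ^ 2) := by
    intro j
    have i1 : Integrable (ξ j) := (hL2 j).integrable (by norm_num)
    have i2 : Integrable (fun ω => (ξ j ω) ^ 2) := (hL2 j).integrable_sq
    have : mgf (xbar ξ j) ℙ 1 ≤ ∫ ω, (1 + ξ j ω + (ξ j ω) ^ 2) := by
      unfold mgf
      refine integral_mono_of_nonneg (Filter.Eventually.of_forall fun ω => (Real.exp_pos _).le)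
        (((integrable_const _).add i1).add i2) (Filter.Eventually.of_forall fun ω => ?_)
      simp only [one_mul]
      exact exp_trunc1 _
    have i3 : Integrable (fun ω => 1 + ξ j ω) := (integrable_const _).add i1
    rw [integral_add i3 i2, integral_add (integrable_const _) i1,
      hmean] at this
    simp only [integral_const, probReal_univ, smul_eq_mul, mul_one, add_zero] at this
    linarith [Real.add_one_le_exp (∫ ω, (ξ j ω) ^ 2)]
  have hE : ∫ ω, Real.exp (Wbari ξ i ω) ≤ Real.exp 1 := by
    have h1 : ∫ ω, Real.exp (Wbari ξ i ω) = mgf (∑ j ∈ Finset.univ.erase i, xbar ξ j) ℙ 1 := by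
      rw [← hW]; simp [mgf]
    rw [h1, hxind.mgf_sum hxm]
    calc _ ≤ ∏ j ∈ Finset.univ.erase i, Real.exp (∫ ω, (ξ j ω) ^ 2) :=
          Finset.prod_le_prod (fun j _ => mgf_nonneg) fun j _ => hmgf j
      _ = Real.exp (∑ j ∈ Finset.univ.erase i, ∫ ω, (ξ j ω) ^ 2) := (Real.exp_sum _ _).symm
      _ ≤ Real.exp 1 := by
          apply Real.exp_le_exp.2
          rw [← hvar]
          exact Finset.sum_le_sum_of_subset_of_nonneg (Finset.erase_subset _ _)
            fun j _ _ => integral_nonneg fun ω => sq_nonneg _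
  have hC : (25.8 : ℝ) ≤ 25.8 + 20 * Real.exp (Real.exp 1 ^ 2 - 2) / Real.sqrt (2 * Real.pi) := by
    have : 0 ≤ 20 * Real.exp (Real.exp 1 ^ 2 - 2) / Real.sqrt (2 * Real.pi) := by positivity
    linarith
  refine le_trans ?_ (mul_le_mul_of_nonneg_right hC (Real.exp_pos _).le)
  by_cases hg : Integrable (fun ω => fz z (Wbari ξ i ω + u)
      + (Wbari ξ i ω + u) * fz' z (Wbari ξ i ω + u))
  swap
  · rw [integral_undef hg]; positivity
  have hi2 : Integrable (fun ω => (z + 1) * Real.exp (u - z) * Real.exp (Wbari ξ i ω)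
      + Real.exp (-z)) := (hint.const_mul _).add (integrable_const _)
  have hz1 : z + 1 ≤ 2 * Real.exp (z / 2) := by linarith [Real.add_one_le_exp (z / 2)]
  calc _ ≤ ∫ ω, ((z + 1) * Real.exp (u - z) * Real.exp (Wbari ξ i ω) + Real.exp (-z)) := by
        refine integral_mono hg hi2 fun ω => ?_
        refine (g_bound z _ hz).trans (le_of_eq ?_)
        rw [mul_assoc, ← Real.exp_add]
        congr 3; ring
    _ = (z + 1) * Real.exp (u - z) * (∫ ω, Real.exp (Wbari ξ i ω)) + Real.exp (-z) := by
        rw [integral_add (hint.const_mul _) (integrable_const _), integral_const_mul]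
        simp
    _ ≤ (2 * Real.exp (z / 2)) * Real.exp (1 - z) * Real.exp 1 + Real.exp (-z / 2) := by
        gcongr
        linarith
    _ = (2 * (Real.exp 1 * Real.exp 1) + 1) * Real.exp (-z / 2) := by
        have : Real.exp (1 - z) = Real.exp 1 * Real.exp (-z / 2) * Real.exp (-z / 2) := by
          rw [← Real.exp_add, ← Real.exp_add]; congr 1; ring
        have h2 : Real.exp (z / 2) * Real.exp (-z / 2) = 1 := by
          rw [← Real.exp_add, ← Real.exp_zero]; congr 1; ring
        rw [this]
        linear_combination (2 * Real.exp 1 * Real.exp 1 * Real.exp (-z / 2)) * h2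
    _ ≤ 25.8 * Real.exp (-z / 2) := by
        apply mul_le_mul_of_nonneg_right _ (Real.exp_pos _).le
        have := Real.exp_one_lt_d9
        nlinarith [Real.exp_pos 1]
end

section
/- For every z ∈ ℝ, E[W̄ f_z(W̄)] = Σᵢ₌₁ⁿ ∫_{−∞}^1 E[f_z′(W̄⁽ⁱ⁾ + t)] K̄ᵢ(t) dt + Σᵢ₌₁ⁿ E[x̄ᵢ] · E[f_z(W̄⁽ⁱ⁾)]. -/
open MeasureTheory ProbabilityTheory Real

namespace SteinAux

lemma gInt : Integrable (fun u : ℝ => Real.exp (-u ^ 2 / 2)) := by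
  have := integrable_exp_neg_mul_sq (b := 1 / 2) (by norm_num)
  refine this.congr (ae_of_all _ fun u => ?_)
  simp only; congr 1; ring

lemma gTotal : ∫ u : ℝ, Real.exp (-u ^ 2 / 2) = Real.sqrt (2 * Real.pi) := by
  have := integral_gaussian (1 / 2)
  rw [show Real.pi / (1 / 2) = 2 * Real.pi by ring] at this
  rw [← this]
  congr 1; ext u; congr 1; ring

lemma cpos : 0 < Real.sqrt (2 * Real.pi) := by positivity

lemma one_sub_Phi (w : ℝ) : 1 - Phi w =
    (Real.sqrt (2 * Real.pi))⁻¹ * ∫ u in Set.Ioi w, Real.exp (-u ^ 2 / 2) := by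
  have h := intervalIntegral.integral_Iic_add_Ioi (b := w) gInt.integrableOn gInt.integrableOn
  rw [gTotal] at h
  have hc := cpos
  unfold Phi
  rw [eq_sub_of_add_eq' h]
  field_simp

lemma Phi_nonneg (w : ℝ) : 0 ≤ Phi w := by
  unfold Phi
  have := cpos
  have : 0 ≤ ∫ u in Set.Iic w, Real.exp (-u ^ 2 / 2) := integral_nonneg fun u => (Real.exp_pos _).le
  positivity

lemma one_sub_Phi_nonneg (w : ℝ) : 0 ≤ 1 - Phi w := by
  rw [one_sub_Phi]
  have := cpos
  have : 0 ≤ ∫ u in Set.Ioi w, Real.exp (-u ^ 2 / 2) := integral_nonneg fun u => (Real.exp_pos _).le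
  positivity

lemma Phi_neg (w : ℝ) : Phi (-w) = 1 - Phi w := by
  have h := integral_comp_neg_Iic (-w) (fun u : ℝ => Real.exp (-u ^ 2 / 2))
  simp only [neg_neg, neg_sq] at h
  rw [one_sub_Phi, Phi, ← h]

lemma Phi_hasDeriv (w : ℝ) :
    HasDerivAt Phi ((Real.sqrt (2 * Real.pi))⁻¹ * Real.exp (-w ^ 2 / 2)) w := by
  have hc : Continuous fun u : ℝ => Real.exp (-u ^ 2 / 2) := by fun_prop
  have h := (hc.integral_hasStrictDerivAt 0 w).hasDerivAt
  have h2 := (h.const_mul (Real.sqrt (2 * Real.pi))⁻¹).const_add (Phi 0)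
  refine h2.congr_of_eventuallyEq (Filter.Eventually.of_forall fun x => ?_)
  simp only [Phi]
  rw [← intervalIntegral.integral_Iic_sub_Iic gInt.integrableOn gInt.integrableOn]
  ring

lemma Phi_mono : Monotone Phi := by
  refine monotone_of_deriv_nonneg (fun w => (Phi_hasDeriv w).differentiableAt) fun w => ?_
  rw [(Phi_hasDeriv w).deriv]; positivity

lemma mills_int (w : ℝ) (hw : 0 ≤ w) :
    w * ∫ u in Set.Ioi w, Real.exp (-u ^ 2 / 2) ≤ Real.exp (-w ^ 2 / 2) := by
  have hd : ∀ x ∈ Set.Ici w, HasDerivAt (fun u : ℝ => - Real.exp (-u ^ 2 / 2))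
      (x * Real.exp (-x ^ 2 / 2)) x := by
    intro x _
    have h1 : HasDerivAt (fun u : ℝ => -u ^ 2 / 2) (-x) x := by
      have := ((hasDerivAt_pow 2 x).neg).div_const 2
      convert! this using 1
      simp
      ring
    convert! h1.exp.neg using 1
    ring
  have ht : Filter.Tendsto (fun u : ℝ => - Real.exp (-u ^ 2 / 2)) Filter.atTop (nhds 0) := by
    rw [← neg_zero]
    refine Filter.Tendsto.neg (Real.tendsto_exp_atBot.comp ?_)
    have : Filter.Tendsto (fun u : ℝ => u ^ 2 / 2) Filter.atTop Filter.atTop :=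
      (Filter.tendsto_pow_atTop (by norm_num)).atTop_div_const (by norm_num)
    refine (Filter.tendsto_neg_atTop_atBot.comp this).congr fun u => ?_
    simp only [Function.comp]; ring
  have hi := integrableOn_Ioi_deriv_of_nonneg' hd
    (fun x hx => mul_nonneg (hw.trans (le_of_lt hx)) (Real.exp_pos _).le) ht
  have he := integral_Ioi_of_hasDerivAt_of_tendsto' hd hi ht
  rw [← integral_const_mul]
  calc _ ≤ ∫ u in Set.Ioi w, u * Real.exp (-u ^ 2 / 2) := by
        refine setIntegral_mono_on (gInt.integrableOn.const_mul w) hi measurableSet_Ioi ?_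
        intro x hx
        exact mul_le_mul_of_nonneg_right (le_of_lt hx) (Real.exp_pos _).le
    _ = _ := by rw [he]; ring

lemma mills (w : ℝ) (hw : 0 ≤ w) :
    w * (Real.sqrt (2 * Real.pi) * Real.exp (w ^ 2 / 2) * (1 - Phi w)) ≤ 1 := by
  rw [one_sub_Phi]
  have h := mul_le_mul_of_nonneg_left (mills_int w hw) (Real.exp_pos (w ^ 2 / 2)).le
  rw [← Real.exp_add, show w ^ 2 / 2 + -w ^ 2 / 2 = 0 by ring, Real.exp_zero] at h
  have hc := cpos
  calc _ = Real.exp (w ^ 2 / 2) * (w * ∫ u in Set.Ioi w, Real.exp (-u ^ 2 / 2)) := by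
        field_simp
    _ ≤ 1 := h

lemma fz_nonneg (z w : ℝ) : 0 ≤ fz z w := by
  have := Phi_nonneg w; have := Phi_nonneg z
  have := one_sub_Phi_nonneg w; have := one_sub_Phi_nonneg z
  unfold fz
  split_ifs <;> positivity

lemma fz_le_right (z w : ℝ) :
    fz z w ≤ Real.sqrt (2 * Real.pi) * Real.exp (w ^ 2 / 2) * (1 - Phi w) := by
  have h1 := Phi_nonneg w; have h2 := Phi_nonneg z
  have h3 := one_sub_Phi_nonneg w; have h4 := one_sub_Phi_nonneg z
  have hA : 0 ≤ Real.sqrt (2 * Real.pi) * Real.exp (w ^ 2 / 2) := by positivity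
  unfold fz
  split_ifs with h
  · have := Phi_mono h
    rw [mul_assoc]
    refine mul_le_mul_of_nonneg_left ?_ hA
    nlinarith
  · rw [mul_assoc]
    refine mul_le_mul_of_nonneg_left ?_ hA
    nlinarith

lemma fz_le_left (z w : ℝ) :
    fz z w ≤ Real.sqrt (2 * Real.pi) * Real.exp (w ^ 2 / 2) * Phi w := by
  have h1 := Phi_nonneg w; have h2 := Phi_nonneg z
  have h3 := one_sub_Phi_nonneg w; have h4 := one_sub_Phi_nonneg z
  have hA : 0 ≤ Real.sqrt (2 * Real.pi) * Real.exp (w ^ 2 / 2) := by positivity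
  unfold fz
  split_ifs with h
  · rw [mul_assoc]
    refine mul_le_mul_of_nonneg_left ?_ hA
    nlinarith
  · have := Phi_mono (le_of_not_ge h)
    rw [mul_assoc]
    refine mul_le_mul_of_nonneg_left ?_ hA
    nlinarith

lemma abs_mul_fz_le (z w : ℝ) : |w| * fz z w ≤ 1 := by
  rcases le_total 0 w with hw | hw
  · rw [abs_of_nonneg hw]
    exact (mul_le_mul_of_nonneg_left (fz_le_right z w) hw).trans (mills w hw)
  · rw [abs_of_nonpos hw]
    have hw' : 0 ≤ -w := by linarith
    refine (mul_le_mul_of_nonneg_left (fz_le_left z w) hw').trans ?_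
    have := mills (-w) hw'
    rw [← Phi_neg] at this
    simpa using this

lemma fz_bdd (z w : ℝ) : |fz z w| ≤ Real.sqrt (2 * Real.pi) * Real.exp 1 + 1 := by
  rw [abs_of_nonneg (fz_nonneg z w)]
  have h0 := fz_nonneg z w
  have hc := cpos
  have hp : 0 ≤ Real.sqrt (2 * Real.pi) * Real.exp 1 := by positivity
  rcases le_total 1 |w| with h | h
  · have := abs_mul_fz_le z w
    nlinarith
  · have h1 := fz_le_left z w
    have h3 := one_sub_Phi_nonneg w
    have hA : 0 ≤ Real.sqrt (2 * Real.pi) * Real.exp (w ^ 2 / 2) := by positivity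
    have h4 : Real.exp (w ^ 2 / 2) ≤ Real.exp 1 := by
      apply Real.exp_le_exp.2
      have := abs_le.1 h
      nlinarith
    have h5 : Real.sqrt (2 * Real.pi) * Real.exp (w ^ 2 / 2) ≤
      Real.sqrt (2 * Real.pi) * Real.exp 1 := by gcongr
    nlinarith

lemma fz'_bdd (z w : ℝ) : |fz' z w| ≤ 3 := by
  have h1 := abs_mul_fz_le z w
  have h2 : |w * fz z w| ≤ 1 := by rwa [abs_mul, abs_of_nonneg (fz_nonneg z w)]
  have h3 := Phi_nonneg z; have h4 := one_sub_Phi_nonneg z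
  have h5 := abs_le.1 h2
  unfold fz'
  rw [abs_le]
  split_ifs <;> constructor <;> linarith

lemma Phi_cont : Continuous Phi :=
  continuous_iff_continuousAt.2 fun w => (Phi_hasDeriv w).continuousAt

lemma fz_cont (z : ℝ) : Continuous (fz z) := by
  have := Phi_cont
  unfold fz
  refine Continuous.if_le (by fun_prop) (by fun_prop) continuous_id continuous_const ?_
  rintro w rfl
  ring

lemma fz'_meas (z : ℝ) : Measurable (fz' z) := by
  have := (fz_cont z).measurable
  unfold fz'
  refine ((measurable_id.mul this).add ?_).sub measurable_const
  exact Measurable.ite measurableSet_Iic measurable_const measurable_const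

lemma fz_hasDeriv (z w : ℝ) (hw : w ≠ z) : HasDerivAt (fz z) (fz' z w) w := by
  have he : HasDerivAt (fun w : ℝ => Real.sqrt (2 * Real.pi) * Real.exp (w ^ 2 / 2))
      (Real.sqrt (2 * Real.pi) * (Real.exp (w ^ 2 / 2) * w)) w := by
    have h1 : HasDerivAt (fun u : ℝ => u ^ 2 / 2) w w := by
      have := (hasDerivAt_pow 2 w).div_const 2
      convert! this using 1
      simp
    exact h1.exp.const_mul _
  have hP := Phi_hasDeriv w
  have hc := cpos
  have hee : Real.exp (w ^ 2 / 2) * Real.exp (-w ^ 2 / 2) = 1 := by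
    rw [← Real.exp_add, show w ^ 2 / 2 + -w ^ 2 / 2 = 0 by ring, Real.exp_zero]
  have hce : Real.sqrt (2 * Real.pi) * Real.exp (w ^ 2 / 2) *
      ((Real.sqrt (2 * Real.pi))⁻¹ * Real.exp (-w ^ 2 / 2)) = 1 := by
    rw [← hee]; field_simp
  rcases lt_or_gt_of_ne hw with h | h
  · have hd := (he.mul hP).mul_const (1 - Phi z)
    refine (hd.congr_of_eventuallyEq ?_).congr_deriv ?_
    · filter_upwards [eventually_lt_nhds h] with x hx
      simp [fz, hx.le]
    · simp only [fz', fz, h.le, if_true]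
      linear_combination (1 - Phi z) * hce
  · have hd := (he.mul_const (Phi z)).mul (hP.const_sub 1)
    refine (hd.congr_of_eventuallyEq ?_).congr_deriv ?_
    · filter_upwards [eventually_gt_nhds h] with x hx
      simp [fz, not_le.2 hx]
    · simp only [fz', fz, not_le.2 h, if_false]
      linear_combination (- Phi z) * hce

lemma ftc (z w x : ℝ) : ∫ t in (0:ℝ)..x, fz' z (w + t) = fz z (w + x) - fz z w := by
  have h := integral_eq_of_hasDerivAt_off_countable (fun t => fz z (w + t))
    (fun t => fz' z (w + t)) (a := 0) (b := x) (s := {z - w}) (Set.countable_singleton _)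
    ((fz_cont z).comp (by fun_prop)).continuousOn ?_ ?_
  · simpa using h
  · intro t ht
    have hne : w + t ≠ z := by
      intro h
      exact ht.2 (by simp; linarith)
    exact (fz_hasDeriv z (w + t) hne).comp_const_add w t
  · refine (intervalIntegrable_const (c := (3 : ℝ))).mono_fun ?_ ?_
    · exact ((fz'_meas z).comp (by fun_prop)).aestronglyMeasurable
    · refine ae_of_all _ fun t => ?_
      simpa using fz'_bdd z (w + t)

/-- The kernel inside `Kbar`. -/
noncomputable def ker (t x : ℝ) : ℝ :=
  x * ((if 0 ≤ t ∧ t ≤ x then (1 : ℝ) else 0) - (if x ≤ t ∧ t < 0 then (1 : ℝ) else 0))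

lemma ker_pos_eq (x : ℝ) (hx : 0 ≤ x) (g : ℝ → ℝ) :
    (fun t => g t * ker t x) = (Set.Icc 0 x).indicator (fun t => x * g t) := by
  ext t
  have h2 : ¬ (x ≤ t ∧ t < 0) := fun h => by linarith [h.1, h.2]
  simp only [ker, h2, if_false, Set.indicator, Set.mem_Icc]
  split_ifs <;> ring

lemma ker_neg_eq (x : ℝ) (hx : x < 0) (g : ℝ → ℝ) :
    (fun t => g t * ker t x) = (Set.Ico x 0).indicator (fun t => -x * g t) := by
  ext t
  have h2 : ¬ (0 ≤ t ∧ t ≤ x) := fun h => by linarith [h.1, h.2]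
  simp only [ker, h2, if_false, Set.indicator, Set.mem_Ico]
  split_ifs <;> ring

lemma ker_nonneg (t x : ℝ) : 0 ≤ ker t x := by
  unfold ker
  split_ifs with h1 h2 h2
  · linarith [h1.1, h2.2]
  · linarith [h1.1, h1.2]
  · linarith [h2.1, h2.2]
  · simp

lemma ker_meas : Measurable (fun p : ℝ × ℝ => ker p.1 p.2) := by
  unfold ker
  refine measurable_snd.mul (Measurable.sub ?_ ?_)
  · refine Measurable.ite ?_ measurable_const measurable_const
    exact (measurableSet_le measurable_const measurable_fst).inter
      (measurableSet_le measurable_fst measurable_snd)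
  · refine Measurable.ite ?_ measurable_const measurable_const
    exact (measurableSet_le measurable_snd measurable_fst).inter
      (measurableSet_lt measurable_fst measurable_const)

lemma ker_int (x : ℝ) (hx1 : x ≤ 1) (g : ℝ → ℝ) :
    ∫ t in Set.Iic (1 : ℝ), g t * ker t x = x * ∫ t in (0:ℝ)..x, g t := by
  rcases le_or_gt 0 x with hx | hx
  · rw [ker_pos_eq x hx g, setIntegral_indicator measurableSet_Icc,
      Set.inter_eq_right.2 (fun t ht => ht.2.trans hx1), integral_const_mul,
      intervalIntegral.integral_of_le hx, integral_Icc_eq_integral_Ioc]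
  · rw [ker_neg_eq x hx g, setIntegral_indicator measurableSet_Ico,
      Set.inter_eq_right.2 (fun t ht => ht.2.le.trans (by norm_num)), integral_const_mul,
      intervalIntegral.integral_of_ge hx.le, integral_Ico_eq_integral_Ioc]
    ring

lemma ker_integrable (x : ℝ) : Integrable (fun t => ker t x) := by
  rcases le_or_gt 0 x with hx | hx
  · have := ker_pos_eq x hx 1
    simp only [Pi.one_apply, one_mul, mul_one] at this
    rw [this, integrable_indicator_iff measurableSet_Icc]
    exact integrableOn_const (by simp)
  · have := ker_neg_eq x hx 1
    simp only [Pi.one_apply, one_mul, mul_one] at this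
    rw [this, integrable_indicator_iff measurableSet_Ico]
    exact integrableOn_const (by simp)

lemma core {Ω : Type*} [MeasureSpace Ω] [IsProbabilityMeasure (ℙ : Measure Ω)]
    (X W : Ω → ℝ) (hX : Measurable X) (hW : Measurable W) (hXW : IndepFun W X ℙ)
    (hX1 : ∀ ω, X ω ≤ 1) (hX2 : MemLp X 2 ℙ) (z : ℝ) :
    ∫ ω, X ω * fz z (W ω + X ω) =
      (∫ t in Set.Iic (1 : ℝ), (∫ ω, fz' z (W ω + t)) * ∫ ω, ker t (X ω))
      + (∫ ω, X ω) * ∫ ω, fz z (W ω) := by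
  have hXi : Integrable X ℙ := hX2.integrable (by norm_num)
  have hfm := (fz_cont z).measurable
  have hInteg : ∀ Y : Ω → ℝ, Measurable Y → Integrable (fun ω => X ω * fz z (Y ω)) ℙ := by
    intro Y hY
    refine hXi.mul_bdd (c := Real.sqrt (2 * Real.pi) * Real.exp 1 + 1)
      (hfm.comp hY).aestronglyMeasurable (ae_of_all _ fun ω => ?_)
    exact fz_bdd z (Y ω)
  have hker : Integrable (fun p : Ω × ℝ => ker p.2 (X p.1))
      ((ℙ : Measure Ω).prod (volume.restrict (Set.Iic (1 : ℝ)))) := by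
    have hm : Measurable (fun p : Ω × ℝ => ker p.2 (X p.1)) :=
      ker_meas.comp (measurable_snd.prodMk (hX.comp measurable_fst))
    rw [integrable_prod_iff hm.aestronglyMeasurable]
    refine ⟨ae_of_all _ fun ω => (ker_integrable (X ω)).integrableOn, ?_⟩
    refine hX2.integrable_sq.congr (ae_of_all _ fun ω => ?_)
    have := ker_int (X ω) (hX1 ω) 1
    simp only [Pi.one_apply, one_mul] at this
    simp only [Real.norm_eq_abs, abs_of_nonneg (ker_nonneg _ _)]
    rw [this]
    simp [sq]
  have hF : Integrable (Function.uncurry fun (ω : Ω) (t : ℝ) => fz' z (W ω + t) * ker t (X ω))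
      ((ℙ : Measure Ω).prod (volume.restrict (Set.Iic (1 : ℝ)))) := by
    refine hker.bdd_mul (f := fun p : Ω × ℝ => fz' z (W p.1 + p.2)) (c := 3) ?_ ?_
    · exact ((fz'_meas z).comp
        ((hW.comp measurable_fst).add measurable_snd)).aestronglyMeasurable
    · exact ae_of_all _ fun p => fz'_bdd z _
  have hswap := integral_integral_swap hF
  have hL : ∀ ω, ∫ t in Set.Iic (1 : ℝ), fz' z (W ω + t) * ker t (X ω)
      = X ω * fz z (W ω + X ω) - X ω * fz z (W ω) := by
    intro ω
    rw [ker_int (X ω) (hX1 ω), ftc]; ring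
  have hR : ∀ t, ∫ ω, fz' z (W ω + t) * ker t (X ω) =
      (∫ ω, fz' z (W ω + t)) * ∫ ω, ker t (X ω) := by
    intro t
    have h1 : Measurable fun w => fz' z (w + t) := (fz'_meas z).comp (by fun_prop)
    have h2 : Measurable fun x => ker t x := ker_meas.comp measurable_prodMk_left
    exact (hXW.comp h1 h2).integral_mul_eq_mul_integral
      (h1.comp hW).aestronglyMeasurable (h2.comp hX).aestronglyMeasurable
  have hB : ∫ ω, X ω * fz z (W ω) = (∫ ω, X ω) * ∫ ω, fz z (W ω) :=
    (hXW.symm.comp measurable_id hfm).integral_mul_eq_mul_integral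
      hX.aestronglyMeasurable (hfm.comp hW).aestronglyMeasurable
  simp only [hL, hR] at hswap
  rw [integral_sub (hInteg (fun ω => W ω + X ω) (hW.add hX)) (hInteg _ hW), hB] at hswap
  linarith

end SteinAux

/-- Identity (4.21) for E[Wbar f_z(Wbar)]. -/
theorem wbar_fz_identity
    {Ω : Type*} [MeasureSpace Ω] [IsProbabilityMeasure (ℙ : Measure Ω)]
    {n : ℕ} (ξ : Fin n → Ω → ℝ)
    (hmeas : ∀ i, Measurable (ξ i))
    (hindep : iIndepFun ξ ℙ)
    (hL2 : ∀ i, MemLp (ξ i) 2 ℙ)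
    (hmean : ∀ i, ∫ ω, ξ i ω = 0)
    (hvar : ∑ i, ∫ ω, (ξ i ω) ^ 2 = 1)
    (z : ℝ) :
    (∫ ω, Wbar ξ ω * fz z (Wbar ξ ω))
      = (∑ i, ∫ t in Set.Iic (1 : ℝ), (∫ ω, fz' z (Wbari ξ i ω + t)) * Kbar ξ i t)
        + ∑ i, (∫ ω, xbar ξ i ω) * (∫ ω, fz z (Wbari ξ i ω)) := by
  have hxm : Measurable (fun x : ℝ => if x ≤ 1 then x else 0) :=
    Measurable.ite measurableSet_Iic measurable_id measurable_const
  have hm : ∀ i, Measurable (xbar ξ i) := fun i => hxm.comp (hmeas i)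
  have hind : iIndepFun (fun i => xbar ξ i) ℙ := hindep.comp (fun _ => _) (fun _ => hxm)
  have hWi : ∀ i, Wbari ξ i = ∑ j ∈ Finset.univ.erase i, xbar ξ j := by
    intro i
    ext ω
    simp only [Wbari, Wbar, Finset.sum_apply]
    rw [← Finset.add_sum_erase _ _ (Finset.mem_univ i)]
    ring
  have hWm : ∀ i, Measurable (Wbari ξ i) := by
    intro i
    unfold Wbari Wbar
    exact (Finset.measurable_sum _ fun j _ => hm j).sub (hm i)
  have hle : ∀ i ω, |xbar ξ i ω| ≤ |ξ i ω| := by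
    intro i ω
    unfold xbar
    split_ifs <;> simp
  have hx2 : ∀ i, MemLp (xbar ξ i) 2 ℙ := fun i =>
    (hL2 i).mono (hm i).aestronglyMeasurable (ae_of_all _ fun ω => hle i ω)
  have hx1 : ∀ i ω, xbar ξ i ω ≤ 1 := by
    intro i ω
    unfold xbar
    split_ifs with h
    · exact h
    · norm_num
  have hWW : ∀ i ω, Wbari ξ i ω + xbar ξ i ω = Wbar ξ ω := by
    intro i ω; unfold Wbari; ring
  have hcore : ∀ i, ∫ ω, xbar ξ i ω * fz z (Wbar ξ ω) =
      (∫ t in Set.Iic (1 : ℝ), (∫ ω, fz' z (Wbari ξ i ω + t)) * Kbar ξ i t)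
        + (∫ ω, xbar ξ i ω) * (∫ ω, fz z (Wbari ξ i ω)) := by
    intro i
    have hI : IndepFun (Wbari ξ i) (xbar ξ i) ℙ := by
      rw [hWi]
      exact hind.indepFun_finsetSum_of_notMem hm (Finset.notMem_erase i _)
    have := SteinAux.core (xbar ξ i) (Wbari ξ i) (hm i) (hWm i) hI (hx1 i) (hx2 i) z
    simp only [hWW] at this
    exact this
  have hWbm : Measurable (Wbar ξ) := by
    unfold Wbar
    exact Finset.measurable_sum _ fun j _ => hm j
  have hInteg : ∀ i ∈ Finset.univ, Integrable (fun ω => xbar ξ i ω * fz z (Wbar ξ ω)) ℙ := by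
    intro i _
    refine ((hx2 i).integrable (by norm_num)).mul_bdd
      (c := Real.sqrt (2 * Real.pi) * Real.exp 1 + 1)
      ((SteinAux.fz_cont z).measurable.comp hWbm).aestronglyMeasurable (ae_of_all _ fun ω => ?_)
    exact SteinAux.fz_bdd z _
  rw [← Finset.sum_add_distrib, ← Finset.sum_congr rfl fun i _ => hcore i,
    ← integral_finsetSum _ hInteg]
  congr 1
  ext ω
  rw [← Finset.sum_mul]
  rfl
end
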